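/- There exist points v₁, …, v₅ ∈ ℝ² in strictly convex position (listed in counterclockwise order) such that every interior angle of the convex pentagon P = conv{v₁, …, v₅} is strictly greater than π/2, and there exists an external watchman route for {P} whose length is at most 0.93 times the perimeter ∑_{i=1}^{5} ‖v_{i+1} − v_i‖ (indices mod 5) of P. -/

import Mathlib

/-!
The pentagon is a flat house: base from `(-39, 0)` to `(39, 0)`, short outward-leaning walls up to
`(±42, 4)`, and a roof with apex `(0, 44)` whose angle is slightly obtuse; its perimeter is
`78 + 2 * 5 + 2 * 58 = 204`.

The interior of a convex polygon is the intersection of the open half-planes to the left of its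
edges; the nontrivial inclusion holds because such an intersection is covered by the fan of
triangles with apex at one vertex. Hence a boundary point lies in the closed half-plane to the
right of some edge, and is seen from every other point of that half-plane. The point `(47, 0)` lies
to the right of, or on the line of, the base, the right wall and the right roof edge, and
`(-47, 0)` does the same for the other two edges. So walking along the base line from `(-47, 0)` to
`(47, 0)` and back is an external watchman route, of length `188 ≤ 0.93 * 204 = 189.72`.
-/

open Set Metric ENNReal

noncomputable section

abbrev E2 := EuclideanSpace ℝ (Fin 2)

/-- The planar cross product (signed area form). -/
def cross (a b : E2) : ℝ := a 0 * b 1 - a 1 * b 0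

section AffineAndMetric

open scoped NNReal

theorem eVariationOn_Icc_le_of_lipschitzWith {X : Type*} [PseudoEMetricSpace X] {f : ℝ → X}
    {K : ℝ≥0} (hf : LipschitzWith K f) (a b : ℝ) :
    eVariationOn f (Icc a b) ≤ K * ENNReal.ofReal (b - a) := by
  simpa only [Function.comp_id, eVariationOn_id_Icc] using
    (hf.lipschitzOnWith (s := univ)).comp_eVariationOn_le (mapsTo_univ id (Icc a b))

theorem lt_of_mem_interior_of_forall_le {E : Type*} [AddCommGroup E] [Module ℝ E]
    [TopologicalSpace E] [IsTopologicalAddGroup E] [ContinuousSMul ℝ E] {f : E →ᵃ[ℝ] ℝ} {x y : E}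
    (hxy : f x ≠ f y) {s : Set E} {r : ℝ} (hs : ∀ p ∈ s, r ≤ f p) {q : E} (hq : q ∈ interior s) :
    r < f q := by
  have hlinear : f.linear ≠ 0 := by
    intro h
    obtain ⟨c, rfl⟩ := f.linear_eq_zero_iff_exists_const.1 h
    exact hxy rfl
  have hopen : IsOpenMap f := AffineMap.isOpenMap_linear_iff.1
    (f.linear.isOpenMap_of_finiteDimensional (LinearMap.surjective hlinear))
  simpa only [interior_Ici, mem_Ioi] using hopen.mapsTo_interior (t := Ici r) hs hq

theorem pi_div_two_lt_angle_iff_inner_neg {V : Type*} [NormedAddCommGroup V]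
    [InnerProductSpace ℝ V] {x y : V} :
    Real.pi / 2 < InnerProductGeometry.angle x y ↔ inner ℝ x y < 0 := by
  rw [← not_le, ← not_le, not_iff_not, InnerProductGeometry.angle, Real.arccos_le_pi_div_two]
  refine ⟨fun h => ?_, fun h => by positivity⟩
  rw [← InnerProductGeometry.cos_angle_mul_norm_mul_norm, InnerProductGeometry.cos_angle]
  positivity

end AffineAndMetric

section WatchmanRoute

open scoped NNReal

/-- Mutual visibility of two points in the presence of a single obstacle `P`. -/
def MutuallyVisible {E : Type*} [AddCommGroup E] [Module ℝ E] [TopologicalSpace E] (P : Set E)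
    (p q : E) : Prop :=
  Disjoint (segment ℝ p q) (interior P)

/-- External watchman routes of a single obstacle `P`. -/
structure IsExternalWatchmanRoute {E : Type*} [AddCommGroup E] [Module ℝ E] [TopologicalSpace E]
    (P : Set E) (γ : ℝ → E) : Prop where
  continuousOn : ContinuousOn γ (Icc 0 1)
  closed : γ 0 = γ 1
  disjoint : Disjoint (γ '' Icc 0 1) (interior P)
  sees_frontier : ∀ q ∈ frontier P, ∃ t ∈ Icc (0 : ℝ) 1, MutuallyVisible P (γ t) q

variable {E : Type*} [NormedAddCommGroup E] [NormedSpace ℝ E] {P : Set E} {a b : E}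

/-- The tour that walks from `a` straight to `b` during `[0, 1/2]` and straight back during
`[1/2, 1]`, at constant speed. -/
def roundTrip (a b : E) (t : ℝ) : E := AffineMap.lineMap a b (1 - |2 * t - 1|)

@[simp] theorem roundTrip_zero (a b : E) : roundTrip a b 0 = a := by simp [roundTrip]

theorem roundTrip_half (a b : E) : roundTrip a b (1 / 2) = b := by simp [roundTrip]

@[simp] theorem roundTrip_one (a b : E) : roundTrip a b 1 = a := by norm_num [roundTrip]

theorem roundTrip_mem_segment {t : ℝ} (ht : t ∈ Icc (0 : ℝ) 1) :
    roundTrip a b t ∈ segment ℝ a b := by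
  have h : |2 * t - 1| ≤ 1 := abs_le.2 ⟨by linarith [ht.1], by linarith [ht.2]⟩
  exact lineMap_mem_segment ℝ a b ⟨by linarith, by linarith [abs_nonneg (2 * t - 1)]⟩

theorem lipschitzWith_roundTrip (a b : E) : LipschitzWith (2 * nndist a b) (roundTrip a b) := by
  refine LipschitzWith.of_dist_le_mul fun s t => ?_
  calc dist (roundTrip a b s) (roundTrip a b t)
      = abs (|2 * t - 1| - |2 * s - 1|) * dist a b := by
        rw [roundTrip, roundTrip, dist_lineMap_lineMap, Real.dist_eq]
        congr 2
        ring
    _ ≤ |2 * t - 1 - (2 * s - 1)| * dist a b :=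
        mul_le_mul_of_nonneg_right (abs_abs_sub_abs_le_abs_sub _ _) dist_nonneg
    _ = (2 * nndist a b : ℝ≥0) * dist s t := by
        rw [sub_sub_sub_cancel_right, ← mul_sub, abs_mul, abs_two, abs_sub_comm, ← Real.dist_eq]
        push_cast
        ring

theorem eVariationOn_roundTrip_le (a b : E) :
    eVariationOn (roundTrip a b) (Icc 0 1) ≤ ENNReal.ofReal (2 * dist a b) :=
  calc eVariationOn (roundTrip a b) (Icc 0 1)
      ≤ (2 * nndist a b : ℝ≥0) * ENNReal.ofReal (1 - 0) :=
        eVariationOn_Icc_le_of_lipschitzWith (lipschitzWith_roundTrip a b) 0 1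
    _ = ENNReal.ofReal (2 * dist a b) := by
        rw [sub_zero, ofReal_one, mul_one, ofReal_mul zero_le_two, ← edist_dist, edist_nndist]
        simp

theorem MutuallyVisible.isExternalWatchmanRoute_roundTrip (hab : MutuallyVisible P a b)
    (hP : ∀ q ∈ frontier P, MutuallyVisible P a q ∨ MutuallyVisible P b q) :
    IsExternalWatchmanRoute P (roundTrip a b) where
  continuousOn := (lipschitzWith_roundTrip a b).continuous.continuousOn
  closed := by simp
  disjoint := hab.mono_left (image_subset_iff.2 fun _ => roundTrip_mem_segment)
  sees_frontier q hq := by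
    rcases hP q hq with h | h
    · exact ⟨0, by norm_num, by simpa using h⟩
    · exact ⟨1 / 2, by norm_num, by rwa [roundTrip_half]⟩

end WatchmanRoute

section Orientation

theorem isLinearMap_cross (e : E2) : IsLinearMap ℝ (cross e) where
  map_add p q := by simp only [cross, PiLp.add_apply]; ring
  map_smul r p := by simp only [cross, PiLp.smul_apply, smul_eq_mul]; ring

/-- Twice the signed area of the triangle `a b c`, bundled as an affine function of `c`: it is
positive to the left of the directed line from `a` to `b`, and negative to the right. -/
def orient (a b : E2) : E2 →ᵃ[ℝ] ℝ where
  toFun c := cross (b - a) (c - a)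
  linear := (isLinearMap_cross (b - a)).mk'
  map_vadd' c w := by simp [add_sub_assoc, (isLinearMap_cross (b - a)).map_add]

theorem orient_apply (a b c : E2) : orient a b c = cross (b - a) (c - a) := rfl

theorem orient_self (a b : E2) : orient a a b = 0 := by simp [orient_apply, cross]

@[simp] theorem orient_left (a b : E2) : orient a b a = 0 := by simp [orient_apply, cross]

@[simp] theorem orient_right (a b : E2) : orient a b b = 0 := by
  simp [orient_apply, cross, mul_comm]

theorem orient_rotate (a b c : E2) : orient b c a = orient a b c := by
  simp only [orient_apply, cross, PiLp.sub_apply]; ring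

theorem orient_swap (a b c : E2) : orient b a c = -orient a b c := by
  simp only [orient_apply, cross, PiLp.sub_apply]; ring

theorem orient_eq_cross_sub_sub (a b c : E2) : orient a b c = cross (b - a) (c - b) := by
  simp only [orient_apply, cross, PiLp.sub_apply]; ring

theorem orient_add_orient_add_orient (a b c q : E2) :
    orient b c q + orient c a q + orient a b q = orient a b c := by
  simp only [orient_apply, cross, PiLp.sub_apply]; ring

theorem orient_smul_add_smul_add_smul (a b c q : E2) :
    orient b c q • a + orient c a q • b + orient a b q • c = orient a b c • q := by
  ext k
  fin_cases k <;> simp [orient_apply, cross] <;> ring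

theorem mem_of_orient_nonneg {s : Set E2} (hs : Convex ℝ s) {a b c q : E2} (ha : a ∈ s)
    (hb : b ∈ s) (hc : c ∈ s) (habc : 0 < orient a b c) (hbcq : 0 ≤ orient b c q)
    (hcaq : 0 ≤ orient c a q) (habq : 0 ≤ orient a b q) : q ∈ s := by
  -- Up to scaling, the areas `q b c`, `q c a` and `q a b` are the barycentric coordinates of `q`.
  have hsum := orient_add_orient_add_orient a b c q
  have hcenter := hs.centerMass_mem (t := Finset.univ) (z := ![a, b, c])
    (w := ![orient b c q, orient c a q, orient a b q])
    (fun k _ => by fin_cases k <;> assumption)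
    (by simpa [Fin.sum_univ_three, hsum] using habc)
    (fun k _ => by fin_cases k <;> assumption)
  simpa [Finset.centerMass, Fin.sum_univ_three, hsum, orient_smul_add_smul_add_smul,
    inv_smul_smul₀ habc.ne'] using hcenter

end Orientation

/-- A convex polygon with at least three vertices, listed counterclockwise: every vertex not on an
edge lies strictly to the left of it. -/
def IsConvexPolygon {n : ℕ} (v : Fin (n + 3) → E2) : Prop :=
  ∀ ⦃i j⦄, j ≠ i → j ≠ i + 1 → 0 < orient (v i) (v (i + 1)) (v j)

namespace IsConvexPolygon

variable {n : ℕ} {v : Fin (n + 3) → E2} {p q : E2}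

theorem orient_vertex_nonneg (hv : IsConvexPolygon v) (i j : Fin (n + 3)) :
    0 ≤ orient (v i) (v (i + 1)) (v j) := by
  by_cases hi : j = i
  · simp [hi]
  by_cases hi' : j = i + 1
  · simp [hi']
  exact (hv hi hi').le

theorem orient_nonneg_of_mem_convexHull (hv : IsConvexPolygon v) (i : Fin (n + 3))
    (hp : p ∈ convexHull ℝ (range v)) : 0 ≤ orient (v i) (v (i + 1)) p := by
  have hvertices : range v ⊆ orient (v i) (v (i + 1)) ⁻¹' Ici 0 :=
    range_subset_iff.2 (hv.orient_vertex_nonneg i)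
  exact convexHull_min hvertices ((convex_Ici 0).affine_preimage _) hp

theorem orient_add_two_pos (hv : IsConvexPolygon v) (i : Fin (n + 3)) :
    0 < orient (v i) (v (i + 1)) (v (i + 2)) :=
  hv (by simp [Fin.ext_iff, Nat.mod_eq_of_lt]) (by simp [Fin.ext_iff, Nat.mod_eq_of_lt])

open scoped Fin.CommRing in
theorem notMem_convexHull_image_ne (hv : IsConvexPolygon v) (i : Fin (n + 3)) :
    v i ∉ convexHull ℝ (v '' {j | j ≠ i}) := by
  -- The sum of the orientations along the two edges at `v i` vanishes at `v i` and is positive at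
  -- all other vertices.
  let f : E2 →ᵃ[ℝ] ℝ := orient (v (i - 1)) (v i) + orient (v i) (v (i + 1))
  have hf : convexHull ℝ (v '' {j | j ≠ i}) ⊆ f ⁻¹' Ioi 0 := by
    refine convexHull_min ?_ ((convex_Ioi 0).affine_preimage f)
    rintro _ ⟨j, hj, rfl⟩
    have hin := hv.orient_vertex_nonneg (i - 1) j
    rw [sub_add_cancel] at hin
    by_cases hsucc : j = i + 1
    · have hpos := hv.orient_add_two_pos (i - 1)
      rw [sub_add_cancel, show i - 1 + 2 = i + 1 by ring] at hpos
      simpa [f, hsucc] using hpos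
    · exact add_pos_of_nonneg_of_pos hin (hv hj hsucc)
  intro hi
  simpa [f] using hf hi

theorem mem_convexHull_of_orient_pos (hv : IsConvexPolygon v)
    (hq : ∀ i, 0 < orient (v i) (v (i + 1)) q) : q ∈ convexHull ℝ (range v) := by
  by_contra hmem
  -- Otherwise `q` is in no triangle of the fan from `v 0`, and so to the left of all its diagonals.
  have hleft (i : Fin (n + 3)) : 0 ≤ orient (v 0) (v i) q := by
    induction i using Fin.induction with
    | zero => exact (orient_self _ _).ge
    | succ j hj =>
      by_contra! hneg
      have hsucc : j.castSucc + 1 = j.succ := Fin.coeSucc_eq_succ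
      have hjq := hq j.castSucc
      rw [hsucc] at hjq
      have hj0 : j.castSucc ≠ 0 := by
        intro h0
        rw [h0] at hjq hsucc
        linarith
      have hpos := hv hj0.symm (by simpa [hsucc] using (Fin.succ_ne_zero j).symm)
      rw [hsucc] at hpos
      have hhull (k : Fin (n + 3)) : v k ∈ convexHull ℝ (range v) :=
        subset_convexHull ℝ _ (mem_range_self k)
      exact hmem (mem_of_orient_nonneg (convex_convexHull ℝ _) (hhull 0) (hhull j.castSucc)
        (hhull j.succ) (by rwa [← orient_rotate]) hjq.le
        (by rw [orient_swap]; linarith) hj)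
  have hlast := hq (Fin.last _)
  rw [Fin.last_add_one, orient_swap] at hlast
  linarith [hleft (Fin.last _)]

theorem interior_convexHull (hv : IsConvexPolygon v) :
    interior (convexHull ℝ (range v)) = {q | ∀ i, 0 < orient (v i) (v (i + 1)) q} := by
  refine Subset.antisymm (fun q hq i => ?_)
    (interior_maximal (fun q hq => hv.mem_convexHull_of_orient_pos hq) ?_)
  · refine lt_of_mem_interior_of_forall_le (f := orient (v i) (v (i + 1)))
      (x := v (i + 2)) (y := v i) ?_ (fun p hp => ?_) hq
    · simpa using (hv.orient_add_two_pos i).ne'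
    · exact hv.orient_nonneg_of_mem_convexHull i hp
  · rw [ofPred_forall]
    exact isOpen_iInter_of_finite fun i =>
      isOpen_lt continuous_const (AffineMap.continuous_of_finiteDimensional _)

theorem mutuallyVisible_of_orient_nonpos (hv : IsConvexPolygon v) {i : Fin (n + 3)}
    (hp : orient (v i) (v (i + 1)) p ≤ 0) (hq : orient (v i) (v (i + 1)) q ≤ 0) :
    MutuallyVisible (convexHull ℝ (range v)) p q := by
  have hconvex := (convex_Iic 0).affine_preimage (orient (v i) (v (i + 1)))
  rw [MutuallyVisible, hv.interior_convexHull]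
  exact disjoint_left.2 fun z hz hz' => (hz' i).not_ge (hconvex.segment_subset hp hq hz)

theorem isExternalWatchmanRoute_roundTrip (hv : IsConvexPolygon v)
    (hpq : MutuallyVisible (convexHull ℝ (range v)) p q)
    (h : ∀ i, orient (v i) (v (i + 1)) p ≤ 0 ∨ orient (v i) (v (i + 1)) q ≤ 0) :
    IsExternalWatchmanRoute (convexHull ℝ (range v)) (roundTrip p q) := by
  refine hpq.isExternalWatchmanRoute_roundTrip fun z hz => ?_
  obtain ⟨i, hi⟩ : ∃ i, orient (v i) (v (i + 1)) z ≤ 0 := by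
    simpa [hv.interior_convexHull] using hz.2
  exact (h i).imp (hv.mutuallyVisible_of_orient_nonpos · hi)
    (hv.mutuallyVisible_of_orient_nonpos · hi)

end IsConvexPolygon

section House

/-- The vertices of the house-shaped pentagon. -/
def house : Fin 5 → E2 := ![!₂[-39, 0], !₂[39, 0], !₂[42, 4], !₂[0, 44], !₂[-42, 4]]

theorem orient_house (i : Fin 5) (p : E2) :
    orient (house i) (house (i + 1)) p =
      ![78 * p 1, 156 - 4 * p 0 + 3 * p 1, 1848 - 40 * p 0 - 42 * p 1,
        1848 + 40 * p 0 - 42 * p 1, 156 + 4 * p 0 + 3 * p 1] i := by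
  fin_cases i <;> simp [house, orient_apply, cross, -mul_eq_mul_right_iff] <;> ring

theorem isConvexPolygon_house : IsConvexPolygon house := by
  intro i j hji hji'
  rw [orient_house]
  fin_cases i <;> fin_cases j <;> first | contradiction | norm_num [house]

theorem pi_div_two_lt_angle_house (i : Fin 5) :
    Real.pi / 2 < EuclideanGeometry.angle (house (i - 1)) (house i) (house (i + 1)) := by
  rw [EuclideanGeometry.angle, pi_div_two_lt_angle_iff_inner_neg]
  fin_cases i <;> simp [house, PiLp.inner_apply, Fin.sum_univ_two] <;> norm_num

theorem perimeter_house : ∑ i : Fin 5, ‖house (i + 1) - house i‖ = 204 := by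
  simp [Fin.sum_univ_five, house, EuclideanSpace.norm_eq, Fin.sum_univ_two]
  norm_num

theorem isExternalWatchmanRoute_house :
    IsExternalWatchmanRoute (convexHull ℝ (range house)) (roundTrip !₂[-47, 0] !₂[47, 0]) := by
  have hbase : MutuallyVisible (convexHull ℝ (range house)) !₂[-47, 0] !₂[47, 0] :=
    isConvexPolygon_house.mutuallyVisible_of_orient_nonpos (i := 0)
      (by rw [orient_house]; simp) (by rw [orient_house]; simp)
  refine isConvexPolygon_house.isExternalWatchmanRoute_roundTrip hbase fun i => ?_
  rw [orient_house, orient_house]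
  fin_cases i <;> norm_num

theorem eVariationOn_roundTrip_house_le :
    eVariationOn (roundTrip (!₂[-47, 0] : E2) !₂[47, 0]) (Icc 0 1) ≤ ENNReal.ofReal 188 := by
  have hdist : dist (!₂[-47, 0] : E2) !₂[47, 0] = 94 := by
    norm_num [EuclideanSpace.dist_eq, Real.dist_eq, Fin.sum_univ_two]
  refine (eVariationOn_roundTrip_le _ _).trans_eq ?_
  norm_num [hdist]

end House

/-- There is a convex pentagon (vertices in strictly convex position, listed
counterclockwise) with all interior angles strictly obtuse, admitting an
external watchman route of length at most `0.93` times its perimeter. -/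
theorem obtuse_pentagon_short_watchman_route :
    ∃ v : Fin 5 → E2,
      (∀ i : Fin 5, v i ∉ convexHull ℝ (v '' {j | j ≠ i})) ∧
      (∀ i : Fin 5, 0 < cross (v (i + 1) - v i) (v (i + 2) - v (i + 1))) ∧
      (∀ i : Fin 5, Real.pi / 2 < EuclideanGeometry.angle (v (i - 1)) (v i) (v (i + 1))) ∧
      (∃ γ : ℝ → E2, ContinuousOn γ (Set.Icc 0 1) ∧ γ 0 = γ 1 ∧
        Disjoint (γ '' Set.Icc 0 1) (interior (convexHull ℝ (Set.range v))) ∧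
        (∀ q ∈ frontier (convexHull ℝ (Set.range v)), ∃ t ∈ Set.Icc (0 : ℝ) 1,
          Disjoint (segment ℝ (γ t) q) (interior (convexHull ℝ (Set.range v)))) ∧
        eVariationOn γ (Set.Icc 0 1) ≤
          ENNReal.ofReal (0.93 * ∑ i : Fin 5, ‖v (i + 1) - v i‖)) := by
  have hroute := isExternalWatchmanRoute_house
  refine ⟨house, isConvexPolygon_house.notMem_convexHull_image_ne, fun i => ?_,
    pi_div_two_lt_angle_house, roundTrip !₂[-47, 0] !₂[47, 0], hroute.continuousOn, hroute.closed,
    hroute.disjoint, hroute.sees_frontier, eVariationOn_roundTrip_house_le.trans ?_⟩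
  · rw [← orient_eq_cross_sub_sub]
    exact isConvexPolygon_house.orient_add_two_pos i
  · rw [perimeter_house]
    exact ENNReal.ofReal_le_ofReal (by norm_num)

end
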